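/- Let a, b ∈ ℝⁿ and suppose a is an upward transport of b. Then the isotonic projection a⁺ majorizes b⁺ in the natural order. -/

import Mathlib

open Finset

/-- The isotonic cone `{x : x₁ ≥ x₂ ≥ ⋯ ≥ xₙ}` in `ℝⁿ`. -/
def isoCone (n : ℕ) : Set (EuclideanSpace ℝ (Fin n)) :=
  {x | ∀ i j : Fin n, i ≤ j → x j ≤ x i}

/-- `p` is the metric (Euclidean) projection of `y` onto `S`. -/
def IsProjOn {n : ℕ} (S : Set (EuclideanSpace ℝ (Fin n)))
    (y p : EuclideanSpace ℝ (Fin n)) : Prop :=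
  p ∈ S ∧ ∀ r ∈ S, ‖y - p‖ ≤ ‖y - r‖

/-- `a` majorizes `b` in the natural order: every initial partial sum of `a`
is at least that of `b`, with equality for the total sums. -/
def MajNO {n : ℕ} (a b : Fin n → ℝ) : Prop :=
  (∀ k : Fin n, ∑ i ∈ Finset.Iic k, b i ≤ ∑ i ∈ Finset.Iic k, a i) ∧
  ∑ i, a i = ∑ i, b i

/-- `a` is an upward transport of `b`: `a` is obtained from `b` by moving some mass
from entry `j` to an earlier entry `i < j`. -/
def UpwardTransport {n : ℕ} (a b : Fin n → ℝ) : Prop :=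
  ∃ i j : Fin n, i < j ∧ (∀ k, k ≠ i → k ≠ j → a k = b k) ∧
    a i + a j = b i + b j ∧ b i ≤ a i

lemma isoCone_convex (n : ℕ) : Convex ℝ (isoCone n) := by
  intro x hx y hy s t hs ht _ i j hij
  have h1 := mul_le_mul_of_nonneg_left (hx i j hij) hs
  have h2 := mul_le_mul_of_nonneg_left (hy i j hij) ht
  simp only [PiLp.add_apply, PiLp.smul_apply, smul_eq_mul]
  linarith

lemma proj_var {n : ℕ} {y p : EuclideanSpace ℝ (Fin n)} (h : IsProjOn (isoCone n) y p)
    (v : Fin n → ℝ) (hv : ∀ i j : Fin n, i ≤ j → p j + v j ≤ p i + v i) :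
    ∑ i, (y i - p i) * v i ≤ 0 := by
  have hinf : ‖y - p‖ = ⨅ w : isoCone n, ‖y - w‖ := by
    have : Nonempty (isoCone n) := ⟨⟨p, h.1⟩⟩
    apply le_antisymm
    · exact le_ciInf fun w => h.2 w w.2
    · exact ciInf_le (f := fun w : isoCone n => ‖y - w‖)
        ⟨0, by rintro _ ⟨w, rfl⟩; exact norm_nonneg _⟩ ⟨p, h.1⟩
  have := (norm_eq_iInf_iff_real_inner_le_zero (isoCone_convex n) h.1).1 hinf
    (p + WithLp.toLp 2 v) (by
      intro i j hij
      simpa using hv i j hij)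
  simpa [PiLp.inner_apply, mul_comm] using this

/-- Partial sum of the entries with index below `m`. -/
noncomputable def psum {n : ℕ} (x : Fin n → ℝ) (m : ℕ) : ℝ := ∑ i, if i.val < m then x i else 0

lemma psum_zero {n : ℕ} (x : Fin n → ℝ) : psum x 0 = 0 := by simp [psum]

lemma psum_full {n : ℕ} (x : Fin n → ℝ) : psum x n = ∑ i, x i := by simp [psum]

lemma psum_Iic {n : ℕ} (x : Fin n → ℝ) (k : Fin n) :
    ∑ i ∈ Finset.Iic k, x i = psum x (k.val + 1) := by
  rw [psum, ← Finset.sum_filter]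
  refine Finset.sum_congr (Finset.ext fun i => ?_) fun _ _ => rfl
  rw [Finset.mem_Iic, Finset.mem_filter, Fin.le_def, Nat.lt_succ_iff]
  exact ⟨fun h => ⟨Finset.mem_univ _, h⟩, fun h => h.2⟩

lemma psum_succ {n : ℕ} (x : Fin n → ℝ) (m : ℕ) (hm : m < n) :
    psum x (m + 1) = psum x m + x ⟨m, hm⟩ := by
  have : x ⟨m, hm⟩ = ∑ i, if i = ⟨m, hm⟩ then x i else 0 := by simp
  rw [this, psum, psum, ← Finset.sum_add_distrib]
  refine Finset.sum_congr rfl fun i _ => ?_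
  simp only [Fin.ext_iff]
  split_ifs <;> first | omega | simp

lemma sum_mul_ind {n : ℕ} (y p : Fin n → ℝ) (m : ℕ) (c : ℝ) :
    ∑ i, (y i - p i) * (if i.val < m then c else 0) = c * (psum y m - psum p m) := by
  rw [psum, psum, ← Finset.sum_sub_distrib, Finset.mul_sum]
  refine Finset.sum_congr rfl fun i _ => ?_
  split_ifs <;> ring

lemma proj_ge {n : ℕ} {y p : EuclideanSpace ℝ (Fin n)} (h : IsProjOn (isoCone n) y p) (m : ℕ) :
    psum y m ≤ psum p m := by
  have := proj_var h (fun i => if i.val < m then 1 else 0) (by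
    intro i j hij
    have := h.1 i j hij
    have hij' : i.val ≤ j.val := hij
    dsimp only
    split_ifs <;> first | omega | linarith)
  rw [sum_mul_ind] at this
  linarith

lemma proj_total {n : ℕ} {y p : EuclideanSpace ℝ (Fin n)} (h : IsProjOn (isoCone n) y p) :
    psum y n = psum p n := by
  apply le_antisymm (proj_ge h n)
  have := proj_var h (fun i => if i.val < n then -1 else 0) (by
    intro i j hij
    have := h.1 i j hij
    simpa using this)
  rw [sum_mul_ind] at this
  linarith

lemma proj_compl {n : ℕ} {y p : EuclideanSpace ℝ (Fin n)} (h : IsProjOn (isoCone n) y p)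
    (m : ℕ) (hm : m + 1 < n) (hlt : p ⟨m + 1, hm⟩ < p ⟨m, by omega⟩) :
    psum p (m + 1) ≤ psum y (m + 1) := by
  have := proj_var h
    (fun i => if i.val < m + 1 then -(p ⟨m, by omega⟩ - p ⟨m + 1, hm⟩) else 0) (by
    intro i j hij
    have h0 := h.1 i j hij
    have hij' : i.val ≤ j.val := hij
    dsimp only
    split_ifs with h1 h2 h2
    · linarith
    · omega
    · have h3 := h.1 i ⟨m, by omega⟩ (Fin.le_def.2 (by simp; omega))
      have h4 := h.1 ⟨m + 1, hm⟩ j (Fin.le_def.2 (by simp; omega))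
      linarith
    · linarith)
  rw [sum_mul_ind] at this
  by_contra hc
  push Not at hc
  nlinarith [mul_pos (sub_pos.2 hlt) (sub_pos.2 hc)]

lemma transport_psum {n : ℕ} {a b : Fin n → ℝ} (h : UpwardTransport a b) :
    (∀ m, psum b m ≤ psum a m) ∧ psum a n = psum b n := by
  obtain ⟨i, j, hij, hk, hs, hi⟩ := h
  have key : ∀ m, psum a m - psum b m =
      (if i.val < m then a i - b i else 0) + (if j.val < m then a j - b j else 0) := by
    intro m
    rw [psum, psum, ← Finset.sum_sub_distrib,
      ← Finset.sum_subset (Finset.subset_univ {i, j}), Finset.sum_pair hij.ne]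
    · split_ifs <;> ring
    · intro k _ hkk
      simp only [Finset.mem_insert, Finset.mem_singleton, not_or] at hkk
      rw [hk k hkk.1 hkk.2, sub_self]
  have hij' : i.val < j.val := hij
  constructor
  · intro m
    have := key m
    split_ifs at this <;> first | omega | linarith
  · have := key n
    simp only [i.2, j.2, if_true] at this
    linarith

/-- Lemma 6.6 (`lm:swap`): if `a` is an upward transport of `b`, then the isotonic
projections satisfy `a⁺ ≽ₙₒ b⁺`. -/
theorem isoProj_majNO_of_upwardTransport {n : ℕ} (a b ap bp : EuclideanSpace ℝ (Fin n))
    (hab : UpwardTransport a b)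
    (hap : IsProjOn (isoCone n) a ap) (hbp : IsProjOn (isoCone n) b bp) :
    MajNO ap bp := by
  obtain ⟨hm, ht⟩ := transport_psum hab
  have htot : psum ap n = psum bp n := by rw [← proj_total hap, ← proj_total hbp, ht]
  refine ⟨fun k => ?_, by rw [← psum_full, ← psum_full]; exact htot⟩
  rw [psum_Iic, psum_Iic]
  by_contra hc
  push Not at hc
  have hex : ∃ m, m ≤ n ∧ ∀ m' ≤ n, psum bp m' - psum ap m' ≤ psum bp m - psum ap m := by
    obtain ⟨m, h1, h2⟩ := Finset.exists_max_image (Finset.range (n + 1))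
      (fun m => psum bp m - psum ap m) ⟨0, by simp⟩
    exact ⟨m, by simpa [Nat.lt_succ_iff] using h1,
      fun m' h' => h2 m' (by simpa [Nat.lt_succ_iff] using h')⟩
  classical
  obtain ⟨hle, hmax⟩ := Nat.find_spec hex
  have hmin := fun m' => @Nat.find_min _ _ hex m'
  generalize Nat.find hex = m at hle hmax hmin
  have hpos : 0 < psum bp m - psum ap m := by
    have := hmax (k.val + 1) (by omega)
    linarith
  rcases m with _ | m
  · simp [psum_zero] at hpos
  have hne : m + 1 ≠ n := by
    intro h
    rw [h] at hpos
    linarith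
  have hlt : m + 1 < n := by omega
  have h1 := hmin m (by omega)
  push Not at h1
  obtain ⟨m', hm', h1⟩ := h1 (by omega)
  have h2 := hmax m' hm'
  have h3 := hmax (m + 2) (by omega)
  have e1 := psum_succ ap m (by omega)
  have e2 := psum_succ bp m (by omega)
  have e3 := psum_succ ap (m + 1) hlt
  have e4 := psum_succ bp (m + 1) hlt
  have h4 := hap.1 ⟨m, by omega⟩ ⟨m + 1, hlt⟩ (Fin.le_def.2 (by simp))
  have h5 := proj_compl hbp m hlt (by linarith)
  have h6 := proj_ge hap (m + 1)
  have h7 := hm (m + 1)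
  linarith
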